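/- In the MM-SPIR model with the reliability, query-determinism, answer-determinism, and database-privacy constraints, for every size-P subset 𝒫 of {1,…,K}, every index i ∈ {1,…,K} with i ∉ 𝒫, every subset T ⊆ 𝒫, and every database index n ∈ {1,…,N}: H(W_i | W_T, Q_n^{[𝒫]}) = H(W_i | A_n^{[𝒫]}, W_T, Q_n^{[𝒫]}); equivalently, I(W_i; A_n^{[𝒫]} | W_T, Q_n^{[𝒫]}) = 0. -/

import Mathlib

open Finset

namespace MMSPIR

variable {Ω : Type} [Fintype Ω]

/-- Probability that the random variable `X` takes the value `v`,
under the weight function `p` on the finite sample space `Ω`. -/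
noncomputable def prob (p : Ω → ℝ) {V : Type} [DecidableEq V] (X : Ω → V) (v : V) : ℝ :=
  ∑ ω ∈ Finset.univ.filter (fun ω => X ω = v), p ω

/-- Shannon entropy of `X`, with logarithm taken to base `q`. -/
noncomputable def ent (q : ℕ) (p : Ω → ℝ) {V : Type} [Fintype V] [DecidableEq V]
    (X : Ω → V) : ℝ :=
  -∑ v : V, prob p X v * Real.logb q (prob p X v)

/-- Conditional entropy `H(X | Y)`, base `q`. -/
noncomputable def cent (q : ℕ) (p : Ω → ℝ) {V W : Type} [Fintype V] [DecidableEq V]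
    [Fintype W] [DecidableEq W] (X : Ω → V) (Y : Ω → W) : ℝ :=
  ent q p (fun ω => (X ω, Y ω)) - ent q p Y

/-- Mutual information `I(X ; Y)`, base `q`. -/
noncomputable def mi (q : ℕ) (p : Ω → ℝ) {V W : Type} [Fintype V] [DecidableEq V]
    [Fintype W] [DecidableEq W] (X : Ω → V) (Y : Ω → W) : ℝ :=
  ent q p X + ent q p Y - ent q p (fun ω => (X ω, Y ω))

/-- Conditional mutual information `I(X ; Y | Z)`, base `q`. -/
noncomputable def cmi (q : ℕ) (p : Ω → ℝ) {U V W : Type} [Fintype U] [DecidableEq U]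
    [Fintype V] [DecidableEq V] [Fintype W] [DecidableEq W]
    (X : Ω → U) (Y : Ω → V) (Z : Ω → W) : ℝ :=
  cent q p X Z + cent q p Y Z - cent q p (fun ω => (X ω, Y ω)) Z

/-- `X` and `Y` have the same distribution. -/
def IdentDist (p : Ω → ℝ) {V : Type} [DecidableEq V] (X Y : Ω → V) : Prop :=
  ∀ v, prob p X v = prob p Y v

/-!
Let `Y` be the whole transcript (all queries, all answers and the user randomness). By reliability
`Y` determines `W_𝒫`, so database privacy `I(W_𝒫̄; Y) = 0` upgrades to `I(W_𝒫̄; W_𝒫, Y) = 0`. As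
`W_i` is a function of `W_𝒫̄`, and `(A_n, W_T, Q_n)` is a function of `(W_𝒫, Y)`, data processing
gives `I(W_i; A_n, W_T, Q_n) = 0`. By the chain rule this is the sum of the nonnegative terms
`I(W_i; W_T, Q_n)` and `I(W_i; A_n | W_T, Q_n)`, so both vanish.
-/

section Probability

variable {p : Ω → ℝ} {V : Type} [DecidableEq V]

lemma prob_nonneg (hp : ∀ ω, 0 ≤ p ω) (X : Ω → V) (v : V) : 0 ≤ prob p X v :=
  Finset.sum_nonneg fun ω _ => hp ω

lemma prob_apply_pos (hp : ∀ ω, 0 ≤ p ω) (X : Ω → V) {ω : Ω} (hω : 0 < p ω) :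
    0 < prob p X (X ω) :=
  hω.trans_le (Finset.single_le_sum (fun ω' _ => hp ω') (by simp))

lemma sum_prob_mul [Fintype V] (p : Ω → ℝ) (X : Ω → V) (g : V → ℝ) :
    ∑ v, prob p X v * g v = ∑ ω, p ω * g (X ω) := by
  rw [← Finset.sum_fiberwise univ X]
  refine Finset.sum_congr rfl fun v _ => ?_
  rw [prob, Finset.sum_mul]
  exact Finset.sum_congr rfl fun ω hω => by rw [(Finset.mem_filter.1 hω).2]

lemma sum_prob [Fintype V] (p : Ω → ℝ) (X : Ω → V) : ∑ v, prob p X v = ∑ ω, p ω := by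
  simpa using sum_prob_mul p X fun _ => 1

lemma sum_prob_prodMk {U : Type} [Fintype U] [DecidableEq U] (p : Ω → ℝ) (X : Ω → U) (Y : Ω → V)
    (y : V) : ∑ x, prob p (fun ω => (X ω, Y ω)) (x, y) = prob p Y y := by
  rw [prob, ← Finset.sum_fiberwise _ X]
  exact Finset.sum_congr rfl fun x _ =>
    Finset.sum_congr (by ext; simp [and_comm]) fun _ _ => rfl

end Probability

lemma sum_mul_logb_nonpos {ι : Type*} {s : Finset ι} {b : ℝ} {w r : ι → ℝ} (hb : 1 < b)
    (hw : ∀ i ∈ s, 0 ≤ w i) (hr : ∀ i ∈ s, 0 < w i → 0 < r i)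
    (hsum : ∑ i ∈ s, w i * r i ≤ ∑ i ∈ s, w i) : ∑ i ∈ s, w i * Real.logb b (r i) ≤ 0 := by
  have hlog : 0 < Real.log b := Real.log_pos hb
  have hterm : ∀ i ∈ s, w i * Real.logb b (r i) ≤ (w i * r i - w i) / Real.log b := by
    intro i hi
    rcases (hw i hi).eq_or_lt with hwi | hwi
    · simp [← hwi]
    · rw [Real.logb, ← mul_div_assoc, ← mul_sub_one]
      gcongr
      exact Real.log_le_sub_one_of_pos (hr i hi hwi)
  calc ∑ i ∈ s, w i * Real.logb b (r i)
      ≤ ∑ i ∈ s, (w i * r i - w i) / Real.log b := Finset.sum_le_sum hterm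
    _ = (∑ i ∈ s, w i * r i - ∑ i ∈ s, w i) / Real.log b := by
        rw [← Finset.sum_div, Finset.sum_sub_distrib]
    _ ≤ 0 := div_nonpos_of_nonpos_of_nonneg (sub_nonpos.2 hsum) hlog.le

section CondIndepRatio

variable {p : Ω → ℝ} {U V W : Type} [DecidableEq U] [DecidableEq V] [DecidableEq W]

/-- The likelihood ratio `P(x, z) P(y, z) / (P(x, y, z) P(z))` of the law making `X` and `Y`
conditionally independent given `Z` against the joint law, with value `0` where the joint law
vanishes. The conditional mutual information `I(X ; Y | Z)` is the expectation of minus its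
logarithm. -/
noncomputable def condIndepRatio (p : Ω → ℝ) (X : Ω → U) (Y : Ω → V) (Z : Ω → W)
    (t : (U × V) × W) : ℝ :=
  prob p (fun ω => (X ω, Z ω)) (t.1.1, t.2) * prob p (fun ω => (Y ω, Z ω)) (t.1.2, t.2) /
    (prob p (fun ω => ((X ω, Y ω), Z ω)) t * prob p Z t.2)

lemma condIndepRatio_apply_pos (hp : ∀ ω, 0 ≤ p ω) (X : Ω → U) (Y : Ω → V) (Z : Ω → W) {ω : Ω}
    (hω : 0 < p ω) : 0 < condIndepRatio p X Y Z ((X ω, Y ω), Z ω) :=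
  div_pos
    (mul_pos (prob_apply_pos hp (fun ω => (X ω, Z ω)) hω)
      (prob_apply_pos hp (fun ω => (Y ω, Z ω)) hω))
    (mul_pos (prob_apply_pos hp (fun ω => ((X ω, Y ω), Z ω)) hω) (prob_apply_pos hp Z hω))

lemma prob_mul_condIndepRatio_le (hp : ∀ ω, 0 ≤ p ω) (X : Ω → U) (Y : Ω → V) (Z : Ω → W)
    (t : (U × V) × W) :
    prob p (fun ω => ((X ω, Y ω), Z ω)) t * condIndepRatio p X Y Z t ≤
      prob p (fun ω => (X ω, Z ω)) (t.1.1, t.2) * prob p (fun ω => (Y ω, Z ω)) (t.1.2, t.2) /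
        prob p Z t.2 := by
  rcases (prob_nonneg hp (fun ω => ((X ω, Y ω), Z ω)) t).eq_or_lt with ht | ht
  · rw [← ht, zero_mul]
    exact div_nonneg (mul_nonneg (prob_nonneg hp _ _) (prob_nonneg hp _ _)) (prob_nonneg hp _ _)
  · rw [condIndepRatio, mul_comm (prob _ _ t) (prob p Z _), ← div_div, mul_div_cancel₀ _ ht.ne']

lemma sum_mul_condIndepRatio_le [Finite U] [Finite V] [Finite W] (hp : ∀ ω, 0 ≤ p ω)
    (X : Ω → U) (Y : Ω → V) (Z : Ω → W) :
    ∑ ω, p ω * condIndepRatio p X Y Z ((X ω, Y ω), Z ω) ≤ ∑ ω, p ω := by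
  have := Fintype.ofFinite U
  have := Fintype.ofFinite V
  have := Fintype.ofFinite W
  calc ∑ ω, p ω * condIndepRatio p X Y Z ((X ω, Y ω), Z ω)
      = ∑ t, prob p (fun ω => ((X ω, Y ω), Z ω)) t * condIndepRatio p X Y Z t :=
        (sum_prob_mul p (fun ω => ((X ω, Y ω), Z ω)) _).symm
    _ ≤ ∑ t : (U × V) × W, prob p (fun ω => (X ω, Z ω)) (t.1.1, t.2) *
          prob p (fun ω => (Y ω, Z ω)) (t.1.2, t.2) / prob p Z t.2 :=
        Finset.sum_le_sum fun t _ => prob_mul_condIndepRatio_le hp X Y Z t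
    _ = ∑ z, (∑ x, prob p (fun ω => (X ω, Z ω)) (x, z)) *
          (∑ y, prob p (fun ω => (Y ω, Z ω)) (y, z)) / prob p Z z := by
        rw [Fintype.sum_prod_type_right]
        simp only [Fintype.sum_prod_type, Finset.sum_mul_sum, Finset.sum_div]
    _ = ∑ z, prob p Z z := by simp only [sum_prob_prodMk, mul_self_div_self]
    _ = ∑ ω, p ω := sum_prob p Z

end CondIndepRatio

section Entropy

variable {q : ℕ} {p : Ω → ℝ} {U V W T : Type} [Fintype U] [DecidableEq U]
  [Fintype V] [DecidableEq V] [Fintype W] [DecidableEq W] [Fintype T] [DecidableEq T]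

lemma ent_eq_neg_sum (q : ℕ) (p : Ω → ℝ) (X : Ω → V) :
    ent q p X = -∑ ω, p ω * Real.logb q (prob p X (X ω)) := by
  rw [ent, sum_prob_mul p X fun v => Real.logb q (prob p X v)]

lemma ent_congr (q : ℕ) (p : Ω → ℝ) {X : Ω → U} {Y : Ω → V}
    (h : ∀ a b, X a = X b ↔ Y a = Y b) : ent q p X = ent q p Y := by
  simp only [ent_eq_neg_sum, prob, h]

lemma ent_const (q : ℕ) (hp1 : ∑ ω, p ω = 1) (c : V) : ent q p (fun _ => c) = 0 := by
  simp [ent_eq_neg_sum, prob, hp1]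

lemma cmi_eq_neg_sum (q : ℕ) (hp : ∀ ω, 0 ≤ p ω) (X : Ω → U) (Y : Ω → V) (Z : Ω → W) :
    cmi q p X Y Z =
      -∑ ω, p ω * Real.logb q (condIndepRatio p X Y Z ((X ω, Y ω), Z ω)) := by
  simp only [cmi, cent, ent_eq_neg_sum, ← Finset.sum_neg_distrib, ← Finset.sum_sub_distrib,
    ← Finset.sum_add_distrib]
  refine Finset.sum_congr rfl fun ω _ => ?_
  rcases (hp ω).eq_or_lt with hω | hω
  · simp [← hω]
  have hXZ := (prob_apply_pos hp (fun ω => (X ω, Z ω)) hω).ne'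
  have hYZ := (prob_apply_pos hp (fun ω => (Y ω, Z ω)) hω).ne'
  have hXYZ := (prob_apply_pos hp (fun ω => ((X ω, Y ω), Z ω)) hω).ne'
  have hZ := (prob_apply_pos hp Z hω).ne'
  rw [condIndepRatio, Real.logb_div (mul_ne_zero hXZ hYZ) (mul_ne_zero hXYZ hZ),
    Real.logb_mul hXZ hYZ, Real.logb_mul hXYZ hZ]
  ring

lemma cmi_nonneg (hq : 1 < q) (hp : ∀ ω, 0 ≤ p ω) (X : Ω → U) (Y : Ω → V) (Z : Ω → W) :
    0 ≤ cmi q p X Y Z := by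
  rw [cmi_eq_neg_sum q hp, neg_nonneg]
  exact sum_mul_logb_nonpos (Nat.one_lt_cast.2 hq) (fun ω _ => hp ω)
    (fun ω _ hω => condIndepRatio_apply_pos hp X Y Z hω) (sum_mul_condIndepRatio_le hp X Y Z)

lemma cmi_comm (q : ℕ) (p : Ω → ℝ) (X : Ω → U) (Y : Ω → V) (Z : Ω → W) :
    cmi q p X Y Z = cmi q p Y X Z := by
  have hswap : ent q p (fun ω => ((X ω, Y ω), Z ω)) = ent q p (fun ω => ((Y ω, X ω), Z ω)) :=
    ent_congr q p fun a b => by simp only [Prod.mk.injEq, and_comm]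
  simp only [cmi, cent, hswap, add_comm]

lemma cmi_eq_cent_sub_cent (q : ℕ) (p : Ω → ℝ) (X : Ω → U) (Y : Ω → V) (Z : Ω → W) :
    cmi q p X Y Z = cent q p X Z - cent q p X (fun ω => (Y ω, Z ω)) := by
  have hassoc : ent q p (fun ω => ((X ω, Y ω), Z ω)) = ent q p (fun ω => (X ω, Y ω, Z ω)) :=
    ent_congr q p fun a b => by simp only [Prod.mk.injEq, and_assoc]
  rw [cmi, cent, cent, cent, cent, hassoc]
  ring

lemma cent_nonneg (hq : 1 < q) (hp : ∀ ω, 0 ≤ p ω) (X : Ω → U) (Y : Ω → V) :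
    0 ≤ cent q p X Y := by
  have hdiag : ent q p (fun ω => ((X ω, X ω), Y ω)) = ent q p (fun ω => (X ω, Y ω)) :=
    ent_congr q p fun a b => by simp only [Prod.mk.injEq, and_self]
  have hself : cmi q p X X Y = cent q p X Y := by
    rw [cmi, cent, cent, hdiag]
    ring
  exact hself ▸ cmi_nonneg hq hp X X Y

lemma cent_le_of_factorsThrough (hq : 1 < q) (hp : ∀ ω, 0 ≤ p ω) (X : Ω → U) {Y : Ω → V}
    {Z : Ω → W} (hZY : Z.FactorsThrough Y) : cent q p X Y ≤ cent q p X Z := by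
  have hYZ : cent q p X (fun ω => (Y ω, Z ω)) = cent q p X Y := by
    have hfiber (a b : Ω) : (Y a, Z a) = (Y b, Z b) ↔ Y a = Y b := by
      rw [Prod.mk.injEq, and_iff_left_of_imp (@hZY a b)]
    rw [cent, cent, ent_congr q p hfiber]
    congr 1
    exact ent_congr q p fun a b => by rw [Prod.mk.injEq, hfiber, Prod.mk.injEq]
  linarith [cmi_nonneg hq hp X Y Z, cmi_eq_cent_sub_cent q p X Y Z]

lemma cent_eq_zero_of_factorsThrough (hq : 1 < q) (hp : ∀ ω, 0 ≤ p ω) {X : Ω → U} {Y : Ω → V}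
    {Z : Ω → W} (hZY : Z.FactorsThrough Y) (h : cent q p X Z = 0) : cent q p X Y = 0 :=
  ((cent_le_of_factorsThrough hq hp X hZY).trans_eq h).antisymm (cent_nonneg hq hp X Y)

lemma mi_prodMk (q : ℕ) (p : Ω → ℝ) (X : Ω → U) (Y : Ω → V) (Z : Ω → W) :
    mi q p X (fun ω => (Y ω, Z ω)) = mi q p X Z + cmi q p X Y Z := by
  rw [cmi_eq_cent_sub_cent, mi, mi, cent, cent]
  ring

lemma mi_comm (q : ℕ) (p : Ω → ℝ) (X : Ω → U) (Y : Ω → V) : mi q p X Y = mi q p Y X := by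
  have hswap : ent q p (fun ω => (X ω, Y ω)) = ent q p (fun ω => (Y ω, X ω)) :=
    ent_congr q p fun a b => by simp only [Prod.mk.injEq, and_comm]
  rw [mi, mi, hswap, add_comm (ent q p X)]

lemma mi_nonneg (hq : 1 < q) (hp : ∀ ω, 0 ≤ p ω) (hp1 : ∑ ω, p ω = 1) (X : Ω → U) (Y : Ω → V) :
    0 ≤ mi q p X Y := by
  have hunit : cmi q p X Y (fun _ => ()) = mi q p X Y := by
    have hdrop {S : Type} [Fintype S] [DecidableEq S] (R : Ω → S) :
        ent q p (fun ω => (R ω, ())) = ent q p R :=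
      ent_congr q p fun a b => by simp only [Prod.mk.injEq, and_true]
    simp only [cmi, cent, mi, hdrop, ent_const q hp1, sub_zero]
  exact hunit ▸ cmi_nonneg hq hp X Y _

lemma mi_le_of_factorsThrough_right (hq : 1 < q) (hp : ∀ ω, 0 ≤ p ω) (X : Ω → U) {Y : Ω → V}
    {Z : Ω → W} (hZY : Z.FactorsThrough Y) : mi q p X Z ≤ mi q p X Y := by
  have hle := cent_le_of_factorsThrough hq hp X hZY
  rw [cent, cent] at hle
  rw [mi, mi]
  linarith

lemma mi_le_of_factorsThrough (hq : 1 < q) (hp : ∀ ω, 0 ≤ p ω) {X : Ω → U} {X' : Ω → V}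
    {Y : Ω → W} {Y' : Ω → T} (hX : X'.FactorsThrough X) (hY : Y'.FactorsThrough Y) :
    mi q p X' Y' ≤ mi q p X Y :=
  calc mi q p X' Y' ≤ mi q p X' Y := mi_le_of_factorsThrough_right hq hp X' hY
    _ = mi q p Y X' := mi_comm q p X' Y
    _ ≤ mi q p Y X := mi_le_of_factorsThrough_right hq hp Y hX
    _ = mi q p X Y := mi_comm q p Y X

lemma mi_prodMk_of_cent_eq_zero (hq : 1 < q) (hp : ∀ ω, 0 ≤ p ω) (X : Ω → U) {Y : Ω → V}
    {Z : Ω → W} (hYZ : cent q p Y Z = 0) : mi q p X (fun ω => (Y ω, Z ω)) = mi q p X Z := by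
  have hle : cmi q p X Y Z ≤ 0 :=
    calc cmi q p X Y Z = cmi q p Y X Z := cmi_comm q p X Y Z
      _ = cent q p Y Z - cent q p Y (fun ω => (X ω, Z ω)) := cmi_eq_cent_sub_cent q p Y X Z
      _ ≤ cent q p Y Z := sub_le_self _ (cent_nonneg hq hp Y _)
      _ = 0 := hYZ
  rw [mi_prodMk, hle.antisymm (cmi_nonneg hq hp X Y Z), add_zero]

lemma mi_eq_zero_of_factorsThrough (hq : 1 < q) (hp : ∀ ω, 0 ≤ p ω) (hp1 : ∑ ω, p ω = 1)
    {X : Ω → U} {X' : Ω → V} {Y : Ω → W} {Y' : Ω → T} (hX : X'.FactorsThrough X)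
    (hY : Y'.FactorsThrough Y) (h : mi q p X Y = 0) : mi q p X' Y' = 0 :=
  ((mi_le_of_factorsThrough hq hp hX hY).trans_eq h).antisymm (mi_nonneg hq hp hp1 X' Y')

lemma cmi_eq_zero_of_mi_prodMk_eq_zero (hq : 1 < q) (hp : ∀ ω, 0 ≤ p ω) (hp1 : ∑ ω, p ω = 1)
    {X : Ω → U} {Y : Ω → V} {Z : Ω → W} (h : mi q p X (fun ω => (Y ω, Z ω)) = 0) :
    cmi q p X Y Z = 0 := by
  linarith [mi_prodMk q p X Y Z, mi_nonneg hq hp hp1 X Z, cmi_nonneg hq hp X Y Z]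

end Entropy

theorem single_answer_leaks_nothing_about_undesired_general
    {ι ν MT QT AT FT : Type} [Fintype ι] [DecidableEq ι] [Fintype ν] [DecidableEq ν]
    [Fintype MT] [DecidableEq MT] [Fintype QT] [DecidableEq QT]
    [Fintype AT] [DecidableEq AT] [Fintype FT] [DecidableEq FT]
    {q : ℕ} (hq : 1 < q) {p : Ω → ℝ} (hp0 : ∀ ω, 0 ≤ p ω) (hp1 : ∑ ω, p ω = 1)
    {W : ι → Ω → MT} {F : Ω → FT} {Q : ν → Ω → QT} {A : ν → Ω → AT} {𝒫₀ : Finset ι}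
    (hrel : cent q p (fun ω (k : {x : ι // x ∈ 𝒫₀}) => W k.1 ω)
      (fun ω => ((fun n : ν => A n ω), F ω)) = 0)
    (hdpriv : mi q p (fun ω (k : {x : ι // x ∈ 𝒫₀ᶜ}) => W k.1 ω)
      (fun ω => ((fun n : ν => Q n ω), (fun n : ν => A n ω), F ω)) = 0)
    {i : ι} (hi : i ∉ 𝒫₀) {T : Finset ι} (hT : T ⊆ 𝒫₀) (n : ν) :
    (cent q p (W i) (fun ω => ((fun k : {x : ι // x ∈ T} => W k.1 ω), Q n ω)) =
      cent q p (W i) (fun ω => (A n ω, (fun k : {x : ι // x ∈ T} => W k.1 ω), Q n ω))) ∧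
    cmi q p (W i) (A n) (fun ω => ((fun k : {x : ι // x ∈ T} => W k.1 ω), Q n ω)) = 0 := by
  set transcript : Ω → (ν → QT) × (ν → AT) × FT :=
    fun ω => ((fun n => Q n ω), (fun n => A n ω), F ω)
  set desired : Ω → ({x // x ∈ 𝒫₀} → MT) := fun ω k => W k.1 ω
  have hobserved : Function.FactorsThrough (fun ω => ((fun n => A n ω), F ω)) transcript :=
    fun _ _ h => congrArg Prod.snd h
  have hdecode : cent q p desired transcript = 0 :=
    cent_eq_zero_of_factorsThrough hq hp0 hobserved hrel
  have hindep := (mi_prodMk_of_cent_eq_zero hq hp0 _ hdecode).trans hdpriv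
  have hundesired : (W i).FactorsThrough fun ω (k : {x // x ∈ 𝒫₀ᶜ}) => W k.1 ω :=
    fun _ _ h => congrFun h ⟨i, Finset.mem_compl.2 hi⟩
  have hview : Function.FactorsThrough
      (fun ω => (A n ω, (fun k : {x // x ∈ T} => W k.1 ω), Q n ω))
      (fun ω => (desired ω, transcript ω)) := by
    intro a b h
    obtain ⟨hW, hQ, hA, -⟩ := by simpa only [transcript, Prod.mk.injEq] using h
    exact Prod.ext (congrFun hA n)
      (Prod.ext (funext fun k => congrFun hW ⟨k.1, hT k.2⟩) (congrFun hQ n))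
  have hcmi := cmi_eq_zero_of_mi_prodMk_eq_zero hq hp0 hp1
    (mi_eq_zero_of_factorsThrough hq hp0 hp1 hundesired hview hindep)
  exact ⟨sub_eq_zero.1 ((cmi_eq_cent_sub_cent q p _ _ _).symm.trans hcmi), hcmi⟩

theorem single_answer_leaks_nothing_about_undesired
    {Ω MT QT AT FT ST : Type}
    [Fintype Ω] [Fintype MT] [DecidableEq MT] [Fintype QT] [DecidableEq QT]
    [Fintype AT] [DecidableEq AT] [Fintype FT] [DecidableEq FT]
    [Fintype ST] [DecidableEq ST]
    (N K P L q : ℕ) (hN : 2 ≤ N) (hK : 2 ≤ K) (hP1 : 1 ≤ P) (hP2 : P ≤ K - 1)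
    (hL : 1 ≤ L) (hq : IsPrimePow q)
    (p : Ω → ℝ) (hp0 : ∀ ω, 0 ≤ p ω) (hp1 : (∑ ω, p ω) = 1)
    (W : Fin K → Ω → MT) (F : Ω → FT) (S : Ω → ST)
    (Q : Finset (Fin K) → Fin N → Ω → QT)
    (A : Finset (Fin K) → Fin N → Ω → AT)
    (hWk : ∀ k, ent q p (W k) = (L : ℝ))
    (hWall : ent q p (fun ω (k : Fin K) => W k ω) = (K : ℝ) * L)
    (hQdet : ∀ 𝒫₀ : Finset (Fin K), 𝒫₀.card = P →
      cent q p (fun ω (n : Fin N) => Q 𝒫₀ n ω) F = 0)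
    (hAdet : ∀ 𝒫₀ : Finset (Fin K), 𝒫₀.card = P → ∀ n : Fin N,
      cent q p (A 𝒫₀ n) (fun ω => (Q 𝒫₀ n ω, (fun k : Fin K => W k ω), S ω)) = 0)
    (hrel : ∀ 𝒫₀ : Finset (Fin K), 𝒫₀.card = P →
      cent q p (fun ω (k : {x : Fin K // x ∈ 𝒫₀}) => W k.1 ω)
        (fun ω => ((fun n : Fin N => A 𝒫₀ n ω), F ω)) = 0)
    (hdpriv : ∀ 𝒫₀ : Finset (Fin K), 𝒫₀.card = P →
      mi q p (fun ω (k : {x : Fin K // x ∈ 𝒫₀ᶜ}) => W k.1 ω)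
        (fun ω => ((fun n : Fin N => Q 𝒫₀ n ω), (fun n : Fin N => A 𝒫₀ n ω), F ω)) = 0)
    : ∀ (𝒫₀ : Finset (Fin K)), 𝒫₀.card = P → ∀ i : Fin K, i ∉ 𝒫₀ → ∀ T ⊆ 𝒫₀, ∀ n : Fin N,
      (cent q p (W i)
        (fun ω => ((fun k : {x : Fin K // x ∈ T} => W k.1 ω), Q 𝒫₀ n ω)) =
       cent q p (W i)
        (fun ω => (A 𝒫₀ n ω, (fun k : {x : Fin K // x ∈ T} => W k.1 ω), Q 𝒫₀ n ω))) ∧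
      cmi q p (W i) (A 𝒫₀ n)
        (fun ω => ((fun k : {x : Fin K // x ∈ T} => W k.1 ω), Q 𝒫₀ n ω)) = 0 :=
  fun _ hc _ hi _ hT n => single_answer_leaks_nothing_about_undesired_general hq.one_lt hp0 hp1
    (hrel _ hc) (hdpriv _ hc) hi hT n

end MMSPIR
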